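/- arXiv:2405.07080 — 3 statements merged into one kernel-verified Lean document; each statement's English description precedes it below -/
import Mathlib

section
/- Let p be a prime, n ≥ 2, and let q : 𝓗(pⁿ) → 𝓗(pⁿ⁻¹) be componentwise reduction modulo pⁿ⁻¹. For every subgroup H of 𝓗(pⁿ): H is contained in the center Z(𝓗(pⁿ)) if and only if P(H) = C(H), where P(H) = P(H; q). -/
theorem pc_mem_ker_iff {G K : Type*} [Group G] [Group K] (q : G →* K) (s g : G) :
    s⁻¹ * g⁻¹ * s * g ∈ q.ker ↔ Commute (q s) (q g) := by
  rw [MonoidHom.mem_ker]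
  simp only [map_mul, map_inv]
  rw [mul_assoc, ← mul_inv_rev, inv_mul_eq_one, commute_iff_eq]
  exact eq_comm

/-- The `q`-pseudocentralizer of a subset `S` of `G`:
all `g` such that `[s, g] = s⁻¹ * g⁻¹ * s * g ∈ ker q` for all `s ∈ S`. -/
def pseudocentralizer {G K : Type*} [Group G] [Group K] (q : G →* K) (S : Set G) :
    Subgroup G where
  carrier := {g : G | ∀ s ∈ S, s⁻¹ * g⁻¹ * s * g ∈ q.ker}
  one_mem' := fun s _ => by
    rw [pc_mem_ker_iff, map_one]
    exact Commute.one_right _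
  mul_mem' := fun {a b} ha hb s hs => by
    rw [pc_mem_ker_iff, map_mul]
    exact ((pc_mem_ker_iff q s a).mp (ha s hs)).mul_right ((pc_mem_ker_iff q s b).mp (hb s hs))
  inv_mem' := fun {a} ha s hs => by
    rw [pc_mem_ker_iff, map_inv]
    exact ((pc_mem_ker_iff q s a).mp (ha s hs)).inv_right

theorem mem_pseudocentralizer_iff {G K : Type*} [Group G] [Group K] {q : G →* K} {S : Set G}
    {g : G} : g ∈ pseudocentralizer q S ↔ ∀ s ∈ S, s⁻¹ * g⁻¹ * s * g ∈ q.ker := Iff.rfl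

/-- The mod `r` Heisenberg group, as triples `(x, y, z)` over `ZMod r`. -/
@[ext]
structure Heis (r : ℕ) where
  x : ZMod r
  y : ZMod r
  z : ZMod r

namespace Heis

variable {r : ℕ}

private def hmul (a b : Heis r) : Heis r := ⟨a.x + b.x, a.y + b.y + a.x * b.z, a.z + b.z⟩
private def hone : Heis r := ⟨0, 0, 0⟩
private def hinv (a : Heis r) : Heis r := ⟨-a.x, a.x * a.z - a.y, -a.z⟩

instance : Group (Heis r) where
  mul := hmul
  one := hone
  inv := hinv
  mul_assoc a b c := by
    show hmul (hmul a b) c = hmul a (hmul b c)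
    ext <;> (dsimp [hmul]; ring)
  one_mul a := by
    show hmul hone a = a
    ext <;> (dsimp [hmul, hone]; ring)
  mul_one a := by
    show hmul a hone = a
    ext <;> (dsimp [hmul, hone]; ring)
  inv_mul_cancel a := by
    show hmul (hinv a) a = hone
    ext <;> (dsimp [hmul, hinv, hone]; ring)

@[simp] theorem mul_x (a b : Heis r) : (a * b).x = a.x + b.x := rfl
@[simp] theorem mul_y (a b : Heis r) : (a * b).y = a.y + b.y + a.x * b.z := rfl
@[simp] theorem mul_z (a b : Heis r) : (a * b).z = a.z + b.z := rfl
@[simp] theorem one_x : (1 : Heis r).x = 0 := rfl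
@[simp] theorem one_y : (1 : Heis r).y = 0 := rfl
@[simp] theorem one_z : (1 : Heis r).z = 0 := rfl
@[simp] theorem inv_x (a : Heis r) : (a⁻¹).x = -a.x := rfl
@[simp] theorem inv_y (a : Heis r) : (a⁻¹).y = a.x * a.z - a.y := rfl
@[simp] theorem inv_z (a : Heis r) : (a⁻¹).z = -a.z := rfl

/-- Componentwise reduction `Heis r → Heis s` when `s ∣ r`. -/
def heisMap {r s : ℕ} (h : s ∣ r) : Heis r →* Heis s where
  toFun a := ⟨ZMod.castHom h (ZMod s) a.x, ZMod.castHom h (ZMod s) a.y, ZMod.castHom h (ZMod s) a.z⟩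
  map_one' := by
    ext <;> simp only [one_x, one_y, one_z, map_zero]
  map_mul' a b := by
    ext <;> simp only [mul_x, mul_y, mul_z, map_add, map_mul]

end Heis

/-- Componentwise reduction modulo `p ^ (n - 1)` from `Heis (p ^ n)` to `Heis (p ^ (n - 1))`. -/
def heisQ (p n : ℕ) : Heis (p ^ n) →* Heis (p ^ (n - 1)) :=
  Heis.heisMap (pow_dvd_pow p (Nat.sub_le n 1))

/-!
Let `r = s * t`, and let `J` be the ideal of scalars `c : ZMod r` that annihilate the first and
third coordinates of all elements of `S`. Both `(c, 0, 0)` and `(0, 0, c)` centralize `S` exactly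
when `c ∈ J`, and both pseudocentralize `S` along `𝓗(r) → 𝓗(s)` exactly when `t * c ∈ J`. The
equality `P(S) = C(S)` thus makes multiplication by `t` injective on `ZMod r ⧸ J`. If `t` is
nilpotent modulo `r`, as `p` is modulo `p ^ n`, this forces `J = ⊤`, so all these coordinates vanish
and `S` is central.
-/

section Pseudocentralizer

variable {G K : Type*} [Group G] [Group K] {S : Set G}

theorem mem_pseudocentralizer_iff_commute {q : G →* K} {g : G} :
    g ∈ pseudocentralizer q S ↔ ∀ s ∈ S, Commute (q s) (q g) :=
  forall₂_congr fun s _ => pc_mem_ker_iff q s g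

theorem centralizer_le_pseudocentralizer (q : G →* K) (S : Set G) :
    Subgroup.centralizer S ≤ pseudocentralizer q S := fun _ hg =>
  mem_pseudocentralizer_iff_commute.mpr fun s hs =>
    Commute.map (Subgroup.mem_centralizer_iff.mp hg s hs) q

theorem pseudocentralizer_eq_centralizer_of_subset_center (q : G →* K)
    (hS : S ⊆ Subgroup.center G) : pseudocentralizer q S = Subgroup.centralizer S := by
  have htop : Subgroup.centralizer S = ⊤ := Subgroup.centralizer_eq_top_iff_subset.mpr hS
  exact le_antisymm (htop ▸ le_top) (centralizer_le_pseudocentralizer q S)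

end Pseudocentralizer

theorem ideal_eq_top_of_isNilpotent {R : Type*} [Semiring R] {J : Ideal R} {t : R}
    (ht : IsNilpotent t) (hJ : ∀ c, t * c ∈ J → c ∈ J) : J = ⊤ := by
  obtain ⟨k, hk⟩ := ht
  have one_mem_of_pow_mem : ∀ m, t ^ m ∈ J → (1 : R) ∈ J := by
    intro m
    induction m with
    | zero => exact fun h => pow_zero t ▸ h
    | succ m ih => exact fun h => ih (hJ _ (pow_succ' t m ▸ h))
  exact J.eq_top_iff_one.mpr (one_mem_of_pow_mem k (hk ▸ J.zero_mem))

theorem castHom_eq_zero_iff_mul_eq_zero {r s t : ℕ} (hr : s * t = r) (ht : t ≠ 0) (u : ZMod r) :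
    ZMod.castHom (Dvd.intro t hr) (ZMod s) u = 0 ↔ (t : ZMod r) * u = 0 := by
  obtain ⟨m, rfl⟩ := ZMod.intCast_surjective u
  have ht' : (t : ℤ) ≠ 0 := Nat.cast_ne_zero.mpr ht
  rw [map_intCast, ← Int.cast_natCast t, ← Int.cast_mul, ZMod.intCast_zmod_eq_zero_iff_dvd,
    ZMod.intCast_zmod_eq_zero_iff_dvd, ← hr, Nat.cast_mul, mul_comm (s : ℤ),
    mul_dvd_mul_iff_left ht']

namespace Heis

section Commutation

variable {r : ℕ}

theorem commute_iff (a b : Heis r) : Commute a b ↔ a.x * b.z = b.x * a.z := by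
  rw [commute_iff_eq, Heis.ext_iff]
  simp only [mul_x, mul_y, mul_z]
  constructor
  · rintro ⟨-, hy, -⟩
    linear_combination hy
  · intro h
    exact ⟨add_comm _ _, by linear_combination h, add_comm _ _⟩

theorem mem_center_of_x_eq_zero_of_z_eq_zero {a : Heis r} (hx : a.x = 0) (hz : a.z = 0) :
    a ∈ Subgroup.center (Heis r) :=
  Subgroup.mem_center_iff.mpr fun g =>
    (commute_iff g a).mpr (by rw [hx, hz, mul_zero, zero_mul])

theorem commute_mk_x_iff (a : Heis r) (c : ZMod r) : Commute a ⟨c, 0, 0⟩ ↔ c * a.z = 0 := by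
  rw [commute_iff, mul_zero, eq_comm]

theorem commute_mk_z_iff (a : Heis r) (c : ZMod r) : Commute a ⟨0, 0, c⟩ ↔ c * a.x = 0 := by
  rw [commute_iff, zero_mul, mul_comm]

theorem commute_heisMap_iff {s t : ℕ} (hr : s * t = r) (ht : t ≠ 0) (a b : Heis r) :
    Commute (heisMap (Dvd.intro t hr) a) (heisMap (Dvd.intro t hr) b) ↔
      (t : ZMod r) * (a.x * b.z - b.x * a.z) = 0 := by
  rw [← castHom_eq_zero_iff_mul_eq_zero hr ht, map_sub, sub_eq_zero, map_mul, map_mul]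
  exact commute_iff _ _

end Commutation

section CoordAnnihilator

variable {r : ℕ} {S : Set (Heis r)} {c : ZMod r}

/-- The ideal of scalars annihilating the first and third coordinates, i.e. the coordinates modulo
the center, of all elements of `S`. -/
def coordAnnihilator (S : Set (Heis r)) : Ideal (ZMod r) where
  carrier := {c | ∀ a ∈ S, c * a.x = 0 ∧ c * a.z = 0}
  zero_mem' := fun _ _ => ⟨zero_mul _, zero_mul _⟩
  add_mem' := fun {c d} hc hd a ha => by
    rw [add_mul, add_mul, (hc a ha).1, (hc a ha).2, (hd a ha).1, (hd a ha).2, add_zero]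
    exact ⟨rfl, rfl⟩
  smul_mem' := fun d c hc a ha => by
    rw [smul_eq_mul, mul_assoc, mul_assoc, (hc a ha).1, (hc a ha).2, mul_zero]
    exact ⟨rfl, rfl⟩

theorem mem_coordAnnihilator_iff :
    c ∈ coordAnnihilator S ↔ ∀ a ∈ S, c * a.x = 0 ∧ c * a.z = 0 := Iff.rfl

theorem subset_center_of_coordAnnihilator_eq_top (hS : coordAnnihilator S = ⊤) :
    S ⊆ Subgroup.center (Heis r) := by
  intro a ha
  have one_mem : 1 ∈ coordAnnihilator S := (Ideal.eq_top_iff_one _).mp hS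
  obtain ⟨hx, hz⟩ := mem_coordAnnihilator_iff.mp one_mem a ha
  rw [one_mul] at hx hz
  exact mem_center_of_x_eq_zero_of_z_eq_zero hx hz

theorem mem_coordAnnihilator_iff_mem_centralizer :
    c ∈ coordAnnihilator S ↔
      ⟨0, 0, c⟩ ∈ Subgroup.centralizer S ∧ ⟨c, 0, 0⟩ ∈ Subgroup.centralizer S := by
  simp only [mem_coordAnnihilator_iff, Subgroup.mem_centralizer_iff, ← commute_iff_eq,
    commute_mk_x_iff, commute_mk_z_iff, forall_and]

theorem mul_mem_coordAnnihilator_iff_mem_pseudocentralizer {s t : ℕ} (hr : s * t = r)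
    (ht : t ≠ 0) :
    (t : ZMod r) * c ∈ coordAnnihilator S ↔
      ⟨0, 0, c⟩ ∈ pseudocentralizer (heisMap (Dvd.intro t hr)) S ∧
        ⟨c, 0, 0⟩ ∈ pseudocentralizer (heisMap (Dvd.intro t hr)) S := by
  simp only [mem_coordAnnihilator_iff, mem_pseudocentralizer_iff_commute,
    commute_heisMap_iff hr ht, mul_zero, zero_mul, sub_zero, zero_sub, mul_neg, neg_eq_zero,
    forall_and, mul_assoc, mul_comm (x _) c]

end CoordAnnihilator

end Heis

open Heis in
theorem statement7_general {r s t : ℕ} (hr : s * t = r) (ht : t ≠ 0)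
    (hnil : IsNilpotent (t : ZMod r)) (S : Set (Heis r)) :
    S ⊆ Subgroup.center (Heis r) ↔
      pseudocentralizer (heisMap (Dvd.intro t hr)) S = Subgroup.centralizer S := by
  refine ⟨pseudocentralizer_eq_centralizer_of_subset_center _, fun h => ?_⟩
  have cancel : ∀ c, (t : ZMod r) * c ∈ coordAnnihilator S → c ∈ coordAnnihilator S := by
    intro c hc
    rw [mul_mem_coordAnnihilator_iff_mem_pseudocentralizer hr ht, h] at hc
    exact mem_coordAnnihilator_iff_mem_centralizer.mpr hc
  exact subset_center_of_coordAnnihilator_eq_top (ideal_eq_top_of_isNilpotent hnil cancel)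

/-- for every subgroup `H ≤ 𝓗(pⁿ)`: `H ≤ Z(𝓗(pⁿ))` iff `P(H) = C(H)`. -/
theorem statement7 (p n : ℕ) (hp : p.Prime) (hn : 2 ≤ n) (H : Subgroup (Heis (p ^ n))) :
    H ≤ Subgroup.center (Heis (p ^ n)) ↔
      pseudocentralizer (heisQ p n) (H : Set (Heis (p ^ n))) =
        Subgroup.centralizer (H : Set (Heis (p ^ n))) := by
  exact statement7_general (pow_sub_one_mul (Nat.ne_zero_of_lt hn) p) hp.ne_zero
    ⟨n, by exact_mod_cast ZMod.natCast_self (p ^ n)⟩ H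
end

section
/- Let p be a prime, n ≥ 2, and let q : 𝓗(pⁿ) → 𝓗(pⁿ⁻¹) be componentwise reduction modulo pⁿ⁻¹. Let H be a subgroup of 𝓗(pⁿ) and write Z = Z(𝓗(pⁿ)). (1) If the quotient HZ/Z is nontrivial and cyclic, then |C(H)| = p² · |C(q(H))|. (2) If H ≤ Z, then |C(H)| = p³ · |C(q(H))|. Here C(H) is the centralizer of H in 𝓗(pⁿ) and C(q(H)) is the centralizer of q(H) in 𝓗(pⁿ⁻¹). -/
/-!
Commuting with `h` is the linear condition `h.x * g.z = g.x * h.z` on `g`, whose left and right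
sides differ by the central coordinate of a commutator. These coordinates fill the ideal `I`
generated by `h.x` and `h.z`, so the centralizer of `h` in `𝓗(r)` has order `r² · |(ℤ/r) / I|`.
For `r = pⁿ`, a nonzero ideal contains the kernel of reduction modulo `pⁿ⁻¹`, so reduction does not
change the index of `I` and only the factor `r²` drops. When `HZ/Z` is cyclic, both centralizers
are those of a single element.
-/

section Group

variable {G G' : Type*} [Group G] [Group G']

theorem exists_mem_le_zpowers_sup (N : Subgroup G) [N.Normal] (H : Subgroup G)
    [IsCyclic (H.map (QuotientGroup.mk' N))] : ∃ h ∈ H, H ≤ Subgroup.zpowers h ⊔ N := by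
  obtain ⟨y, hy⟩ := (Subgroup.isCyclic_iff_exists_zpowers_eq_top (H.map (QuotientGroup.mk' N))).mp
    inferInstance
  obtain ⟨h, hh, rfl⟩ := Subgroup.mem_map.mp (hy ▸ Subgroup.mem_zpowers y)
  refine ⟨h, hh, ?_⟩
  rw [← MonoidHom.map_zpowers, eq_comm] at hy
  rw [← QuotientGroup.ker_mk' N, ← Subgroup.comap_map_eq, ← hy]
  exact Subgroup.le_comap_map _ _

theorem centralizer_eq_centralizer_singleton {H : Subgroup G} {h : G} (hh : h ∈ H)
    (hH : H ≤ Subgroup.zpowers h ⊔ Subgroup.center G) :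
    Subgroup.centralizer (H : Set G) = Subgroup.centralizer {h} := by
  refine le_antisymm (Subgroup.centralizer_le (Set.singleton_subset_iff.mpr hh)) ?_
  refine Subgroup.le_centralizer_iff.mp (hH.trans (sup_le ?_ (Subgroup.center_le_centralizer _)))
  rw [Subgroup.zpowers_eq_closure]
  exact Subgroup.closure_le_centralizer_centralizer {h}

theorem map_center_le_center {f : G →* G'} (hf : Function.Surjective f) :
    (Subgroup.center G).map f ≤ Subgroup.center G' := by
  rintro _ ⟨z, hz, rfl⟩
  refine Subgroup.mem_center_iff.mpr (hf.forall.mpr fun g => ?_)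
  rw [← map_mul, ← map_mul, Subgroup.mem_center_iff.mp hz g]

theorem map_le_zpowers_sup_center {f : G →* G'} (hf : Function.Surjective f) {H : Subgroup G}
    {h : G} (hH : H ≤ Subgroup.zpowers h ⊔ Subgroup.center G) :
    H.map f ≤ Subgroup.zpowers (f h) ⊔ Subgroup.center G' := by
  refine (Subgroup.map_mono hH).trans ?_
  rw [Subgroup.map_sup, MonoidHom.map_zpowers]
  exact sup_le_sup_left (map_center_le_center hf) _

theorem card_centralizer_of_le_center {H : Subgroup G} (hH : H ≤ Subgroup.center G) :
    Nat.card (Subgroup.centralizer (H : Set G)) = Nat.card G := by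
  rw [Subgroup.centralizer_eq_top_iff_subset.mpr hH, Subgroup.card_top]

end Group

theorem index_map_of_ker_le {R S : Type*} [CommRing R] [CommRing S] {f : R →+* S}
    (hf : Function.Surjective f) {I : Ideal R} (hI : RingHom.ker f ≤ I) :
    (I.map f).toAddSubgroup.index = I.toAddSubgroup.index := by
  have hcomap : (I.map f).comap f = I := by
    rw [Ideal.comap_map_of_surjective' f hf, sup_eq_left.mpr hI]
  conv_rhs => rw [← hcomap]
  exact (AddSubgroup.index_comap_of_surjective (f := (f : R →+ S)) _ hf).symm

theorem ker_castHom_le_of_ne_bot {p m : ℕ} (hp : p.Prime) {I : Ideal (ZMod (p ^ (m + 1)))}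
    (hI : I ≠ ⊥) :
    RingHom.ker (ZMod.castHom (pow_dvd_pow p m.le_succ) (ZMod (p ^ m))) ≤ I := by
  obtain ⟨d, hd⟩ := (IsPrincipalIdealRing.principal (I.comap (Int.castRingHom _))).principal
  have mem_iff (t : ℤ) : (t : ZMod (p ^ (m + 1))) ∈ I ↔ d ∣ t := by
    rw [← Ideal.mem_span_singleton, Ideal.span, ← hd, Ideal.mem_comap, eq_intCast]
  have hd_dvd : d ∣ (p : ℤ) ^ (m + 1) := by
    rw [← mem_iff]
    exact_mod_cast (ZMod.natCast_self (p ^ (m + 1))).symm ▸ I.zero_mem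
  have hd_ne : ¬ (p : ℤ) ^ (m + 1) ∣ d := by
    refine fun hdvd => hI ((Submodule.eq_bot_iff I).mpr fun t ht => ?_)
    obtain ⟨t, rfl⟩ := ZMod.intCast_surjective t
    rw [ZMod.intCast_zmod_eq_zero_iff_dvd]
    exact_mod_cast hdvd.trans ((mem_iff t).mp ht)
  have hd_dvd_pow : d ∣ (p : ℤ) ^ m := by
    obtain ⟨k, hk, hassoc⟩ := (dvd_prime_pow (Nat.prime_iff_prime_int.mp hp) _).mp hd_dvd
    have hkm : k ≠ m + 1 := by
      rintro rfl
      exact hd_ne hassoc.symm.dvd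
    exact hassoc.dvd.trans (pow_dvd_pow _ (by omega))
  intro t ht
  obtain ⟨t, rfl⟩ := ZMod.intCast_surjective t
  rw [RingHom.mem_ker, map_intCast, ZMod.intCast_zmod_eq_zero_iff_dvd] at ht
  exact (mem_iff t).mpr (hd_dvd_pow.trans (by exact_mod_cast ht))

namespace Heis

variable {r s : ℕ}

theorem commute_iff_s11 (g h : Heis r) : Commute g h ↔ g.x * h.z = h.x * g.z := by
  rw [commute_iff_eq, Heis.ext_iff]
  simp only [mul_x, mul_y, mul_z, add_comm, add_right_inj, true_and, and_true]

theorem mem_center_iff (h : Heis r) : h ∈ Subgroup.center (Heis r) ↔ h.x = 0 ∧ h.z = 0 := by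
  simp only [Subgroup.mem_center_iff, ← commute_iff_eq, commute_iff_s11]
  constructor
  · intro hcomm
    exact ⟨by simpa using (hcomm ⟨0, 0, 1⟩).symm, by simpa using hcomm ⟨1, 0, 0⟩⟩
  · rintro ⟨hx, hz⟩ g
    rw [hx, hz, mul_zero, zero_mul]

theorem natCard (r : ℕ) : Nat.card (Heis r) = r ^ 3 := by
  let coordinates : Heis r ≃ ZMod r × ZMod r × ZMod r :=
    { toFun := fun g => (g.x, g.y, g.z)
      invFun := fun t => ⟨t.1, t.2.1, t.2.2⟩ }
  rw [Nat.card_congr coordinates, Nat.card_prod, Nat.card_prod, Nat.card_zmod]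
  ring

theorem heisMap_surjective (hsr : s ∣ r) : Function.Surjective (heisMap hsr) := by
  rintro ⟨x, y, z⟩
  obtain ⟨x, rfl⟩ := ZMod.castHom_surjective hsr x
  obtain ⟨y, rfl⟩ := ZMod.castHom_surjective hsr y
  obtain ⟨z, rfl⟩ := ZMod.castHom_surjective hsr z
  exact ⟨⟨x, y, z⟩, rfl⟩

/-- The homomorphism sending `g` to the `y`-coordinate of the central element `h * g * h⁻¹ * g⁻¹`;
its target is written multiplicatively so that it is a homomorphism of groups. -/
def commutatorHom (h : Heis r) : Heis r →* Multiplicative (ZMod r) where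
  toFun g := Multiplicative.ofAdd (h.x * g.z - g.x * h.z)
  map_one' := by simp
  map_mul' a b := by
    rw [← ofAdd_add, mul_x, mul_z]
    congr 1
    ring

theorem ker_commutatorHom (h : Heis r) : (commutatorHom h).ker = Subgroup.centralizer {h} := by
  ext g
  rw [MonoidHom.mem_ker, Subgroup.mem_centralizer_singleton_iff, ← commute_iff_eq, commute_iff_s11]
  change h.x * g.z - g.x * h.z = 0 ↔ _
  rw [sub_eq_zero, eq_comm]

/-- The ideal of the `y`-coordinates of the commutators of `h` with all elements of the group. -/
def commutatorIdeal (h : Heis r) : Ideal (ZMod r) :=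
  Ideal.span {h.x, h.z}

theorem commutatorIdeal_eq_bot_iff (h : Heis r) :
    commutatorIdeal h = ⊥ ↔ h ∈ Subgroup.center (Heis r) := by
  simp [commutatorIdeal, mem_center_iff]

theorem commutatorIdeal_heisMap (hsr : s ∣ r) (h : Heis r) :
    commutatorIdeal (heisMap hsr h) = (commutatorIdeal h).map (ZMod.castHom hsr (ZMod s)) := by
  rw [commutatorIdeal, commutatorIdeal, Ideal.map_span, Set.image_pair]
  rfl

theorem card_range_commutatorHom (h : Heis r) :
    Nat.card (commutatorHom h).range = Nat.card (commutatorIdeal h) := by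
  refine Nat.card_congr (Multiplicative.toAdd.subtypeEquiv fun t => ?_)
  rw [commutatorIdeal, Ideal.mem_span_pair, MonoidHom.mem_range]
  constructor
  · rintro ⟨g, rfl⟩
    exact ⟨g.z, -g.x, by change _ = h.x * g.z - g.x * h.z; ring⟩
  · rintro ⟨a, b, hab⟩
    refine ⟨⟨-b, 0, a⟩, Multiplicative.toAdd.injective ?_⟩
    rw [← hab]
    change h.x * a - -b * h.z = _
    ring

theorem card_centralizer_singleton [NeZero r] (h : Heis r) :
    Nat.card (Subgroup.centralizer {h}) = r ^ 2 * (commutatorIdeal h).toAddSubgroup.index := by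
  refine Nat.eq_of_mul_eq_mul_right (Nat.card_pos (α := commutatorIdeal h)) ?_
  calc Nat.card (Subgroup.centralizer {h}) * Nat.card (commutatorIdeal h)
      = r ^ 3 := by
        rw [← card_range_commutatorHom, ← Subgroup.index_ker, ker_commutatorHom,
          Subgroup.card_mul_index, natCard]
    _ = r ^ 2 * Nat.card (ZMod r) := by rw [Nat.card_zmod, pow_succ]
    _ = r ^ 2 * (commutatorIdeal h).toAddSubgroup.index * Nat.card (commutatorIdeal h) := by
        rw [← (commutatorIdeal h).toAddSubgroup.index_mul_card, ← mul_assoc]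
        rfl

theorem index_commutatorIdeal_heisMap {p m : ℕ} (hp : p.Prime) {h : Heis (p ^ (m + 1))}
    (hh : h ∉ Subgroup.center (Heis (p ^ (m + 1)))) :
    (commutatorIdeal (heisMap (pow_dvd_pow p m.le_succ) h)).toAddSubgroup.index =
      (commutatorIdeal h).toAddSubgroup.index := by
  rw [commutatorIdeal_heisMap]
  exact index_map_of_ker_le (ZMod.castHom_surjective _)
    (ker_castHom_le_of_ne_bot hp ((commutatorIdeal_eq_bot_iff h).not.mpr hh))

theorem card_centralizer_heisMap_of_notMem_center {p m : ℕ} (hp : p.Prime)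
    {h : Heis (p ^ (m + 1))} (hh : h ∉ Subgroup.center (Heis (p ^ (m + 1)))) :
    Nat.card (Subgroup.centralizer {h}) =
      p ^ 2 * Nat.card (Subgroup.centralizer {heisMap (pow_dvd_pow p m.le_succ) h}) := by
  have : NeZero p := ⟨hp.ne_zero⟩
  rw [card_centralizer_singleton, card_centralizer_singleton, index_commutatorIdeal_heisMap hp hh]
  ring

end Heis

/-- for a subgroup `H ≤ 𝓗(pⁿ)` with `Z = Z(𝓗(pⁿ))`:
(1) if `HZ/Z` is nontrivial and cyclic then `|C(H)| = p² * |C(q(H))|`;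
(2) if `H ≤ Z` then `|C(H)| = p³ * |C(q(H))|`. -/
theorem statement11 (p n : ℕ) (hp : p.Prime) (hn : 2 ≤ n) (H : Subgroup (Heis (p ^ n))) :
    ((H.map (QuotientGroup.mk' (Subgroup.center (Heis (p ^ n)))) ≠ ⊥ ∧
        IsCyclic (H.map (QuotientGroup.mk' (Subgroup.center (Heis (p ^ n)))))) →
      Nat.card (Subgroup.centralizer (H : Set (Heis (p ^ n)))) =
        p ^ 2 * Nat.card (Subgroup.centralizer
          ((H.map (heisQ p n) : Subgroup (Heis (p ^ (n - 1)))) : Set (Heis (p ^ (n - 1)))))) ∧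
    (H ≤ Subgroup.center (Heis (p ^ n)) →
      Nat.card (Subgroup.centralizer (H : Set (Heis (p ^ n)))) =
        p ^ 3 * Nat.card (Subgroup.centralizer
          ((H.map (heisQ p n) : Subgroup (Heis (p ^ (n - 1)))) : Set (Heis (p ^ (n - 1)))))) := by
  obtain ⟨m, rfl⟩ := Nat.exists_eq_add_of_le' (one_le_two.trans hn)
  have hq : Function.Surjective (heisQ p (m + 1)) := Heis.heisMap_surjective _
  constructor
  · rintro ⟨hne, hcyc⟩
    obtain ⟨h, hh, hH⟩ := exists_mem_le_zpowers_sup (Subgroup.center _) H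
    have hh_center : h ∉ Subgroup.center (Heis (p ^ (m + 1))) := by
      refine fun hc => hne ?_
      rw [Subgroup.map_eq_bot_iff, QuotientGroup.ker_mk']
      exact hH.trans (sup_le (Subgroup.zpowers_le.mpr hc) le_rfl)
    rw [centralizer_eq_centralizer_singleton hh hH,
      centralizer_eq_centralizer_singleton (Subgroup.mem_map_of_mem _ hh)
        (map_le_zpowers_sup_center hq hH)]
    exact Heis.card_centralizer_heisMap_of_notMem_center hp hh_center
  · intro hH
    rw [card_centralizer_of_le_center hH,
      card_centralizer_of_le_center ((Subgroup.map_mono hH).trans (map_center_le_center hq)),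
      Heis.natCard, Heis.natCard, Nat.add_sub_cancel]
    ring
end

section
/- Let 1 → G₁ →f G →q G₂ → 1 be a short exact sequence of finite groups. For every subgroup H of G₂, the pseudo Chermak-Delgado measure satisfies m_s(q⁻¹(H)) = m(H) · |G₁|², where m(H) = |H| · |C_{G₂}(H)| is the Chermak-Delgado measure of H in G₂. -/
/-!
The condition `[s, g] ∈ ker q` says that `q s` and `q g` commute, so for surjective `q` the
pseudocentralizer of `q⁻¹(S)` is the full preimage of the centralizer of `S`. Both factors of the
pseudo measure are then cardinalities of preimages under `q`, whose fibres are cosets of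
`ker q ≃ G₁`, and each contributes one factor `|G₁|`.
-/

section

variable {G K : Type*} [Group G] [Group K]

theorem pseudocentralizer_eq_comap_centralizer_image (q : G →* K) (S : Set G) :
    pseudocentralizer q S = (Subgroup.centralizer (q '' S)).comap q := by
  ext g
  simp only [mem_pseudocentralizer_iff, pc_mem_ker_iff, Subgroup.mem_comap,
    Subgroup.mem_centralizer_iff, Set.forall_mem_image, commute_iff_eq]

theorem pseudocentralizer_preimage {q : G →* K} (hq : Function.Surjective q)
    (S : Set K) :
    pseudocentralizer q (q ⁻¹' S) = (Subgroup.centralizer S).comap q := by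
  rw [pseudocentralizer_eq_comap_centralizer_image, Set.image_preimage_eq S hq]

theorem enatCard_preimage_of_surjective {q : G →* K} (hq : Function.Surjective q)
    (S : Set K) :
    ENat.card (q ⁻¹' S) = ENat.card S * ENat.card q.ker := by
  let e : G ⧸ q.ker ≃ K := (QuotientGroup.quotientKerEquivOfSurjective q hq).toEquiv
  have preimageEquiv : q ⁻¹' S ≃ q.ker × (e ⁻¹' S) :=
    QuotientGroup.preimageMkEquivSubgroupProdSet q.ker (e ⁻¹' S)
  have quotientEquiv : e ⁻¹' S ≃ S := e.subtypeEquiv fun _ => Iff.rfl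
  rw [ENat.card_congr preimageEquiv, ENat.card_prod, ENat.card_congr quotientEquiv, mul_comm]

end

/-- Cardinalities are taken in `ℕ∞`, since with `Nat.card` an infinite group would count as `0`. -/
theorem statement16_general {G₁ G G₂ : Type*} [Group G₁] [Group G] [Group G₂]
    (f : G₁ →* G) (q : G →* G₂) (hf : Function.Injective f) (hq : Function.Surjective q)
    (hfq : f.range = q.ker) (S : Set G₂) :
    ENat.card (q ⁻¹' S) * ENat.card (pseudocentralizer q (q ⁻¹' S)) =
      (ENat.card S * ENat.card (Subgroup.centralizer S)) * ENat.card G₁ ^ 2 := by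
  have card_ker : ENat.card q.ker = ENat.card G₁ := by
    rw [← hfq, ENat.card_congr (MonoidHom.ofInjective hf).toEquiv]
  have card_pseudocentralizer : ENat.card (pseudocentralizer q (q ⁻¹' S)) =
      ENat.card (Subgroup.centralizer S) * ENat.card G₁ := by
    rw [pseudocentralizer_preimage hq, ← card_ker]
    exact enatCard_preimage_of_surjective hq (Subgroup.centralizer S : Set G₂)
  rw [card_pseudocentralizer, enatCard_preimage_of_surjective hq, card_ker]
  ring

/-- for a short exact sequence `1 → G₁ → G → G₂ → 1` of finite groups and any
subgroup `H ≤ G₂`: `m_s(q⁻¹(H)) = m(H) * |G₁|²`. -/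
theorem statement16 {G₁ G G₂ : Type*} [Group G₁] [Group G] [Group G₂]
    [Finite G₁] [Finite G] [Finite G₂]
    (f : G₁ →* G) (q : G →* G₂) (hf : Function.Injective f) (hq : Function.Surjective q)
    (hfq : f.range = q.ker) (H : Subgroup G₂) :
    Nat.card (H.comap q) *
        Nat.card (pseudocentralizer q ((H.comap q : Subgroup G) : Set G)) =
      (Nat.card H * Nat.card (Subgroup.centralizer (H : Set G₂))) * Nat.card G₁ ^ 2 := by
  rw [← Nat.cast_inj (R := ℕ∞)]
  simp only [Nat.cast_mul, Nat.cast_pow, ← ENat.card_eq_coe_natCard]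
  exact statement16_general f q hf hq hfq H
end
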